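/- Let r ≥ k ≥ 1 be integers, set m = r − k, and let b > 0 be a real number. Then ∫_0^∞ p_m(bt) · [ ∑_{n=0}^{m} ((−m)_n (1−k−r)_n / (n!)²) · (−t/2)^n ] · e^{−bt} dt = ((k+r−1)! / (2k−1)!) · 1 / (2^m · b^{m+1}). (The bracketed sum is the Jacobi polynomial P^{(0,−2r)}_{m}(t+1); this is the key archimedean integral, evaluated via Laguerre orthogonality, computing the eigenvalue of the archimedean Hecke operator in the indefinite case of the Shimizu lift.) -/

import Mathlib

/-!
The Laguerre polynomial `p_m(bt)` is orthogonal to `t ^ n`, `n < m`, for the weight `e^{-bt}` on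
`(0, ∞)`. Indeed, integrating term by term with
`∫ t ^ n e^{-bt} dt = n! / b ^ (n + 1)` (`integral_pow_mul_exp_neg`), the `n`-th moment of
`p_m(bt) e^{-bt}` is `n! / b ^ (n + 1)` times `∑ j, (-1) ^ j C(m, j) C(j + n, n)`. That sum is, up to
the sign `(-1) ^ m`, the `m`-th forward difference of `x ↦ C(x, n)` at `x = n`, so it is `0` for
`n < m` and `(-1) ^ m` for `n = m` (`sum_alternating_choose_mul_choose`); this gives
`integral_laguerre_mul_pow`. Hence only the leading term `n = m` of the Jacobi polynomial contributes
to the integral, and its coefficient is read off from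
`(-m)_m = (-1) ^ m m!` and `(1 - k - r)_m = (-1) ^ m (k + r - 1)! / (2k - 1)!`, both being instances
of `poch_neg_mul_factorial`.
-/

/-- The Laguerre polynomial p_m(t) = ∑_{j=0}^{m} C(m,j) · (−t)^j / j!. -/
noncomputable def laguerre (m : ℕ) (t : ℝ) : ℝ :=
  ∑ j ∈ Finset.range (m + 1), (m.choose j : ℝ) * (-t) ^ j / (j.factorial : ℝ)

/-- The Pochhammer symbol (α)_n = α(α+1)⋯(α+n−1). -/
def poch (α : ℝ) (n : ℕ) : ℝ := ∏ i ∈ Finset.range n, (α + i)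

/-- The Gamma integral at natural exponents, with the integrability needed to sum over terms. -/
lemma integral_pow_mul_exp_neg {b : ℝ} (hb : 0 < b) (n : ℕ) :
    MeasureTheory.IntegrableOn (fun t : ℝ => t ^ n * Real.exp (-(b * t))) (Set.Ioi 0) ∧
      ∫ t in Set.Ioi (0 : ℝ), t ^ n * Real.exp (-(b * t)) = n.factorial / b ^ (n + 1) := by
  constructor
  · have h := integrableOn_rpow_mul_exp_neg_mul_rpow (p := 1) (s := n) (b := b)
      (by have : (0 : ℝ) ≤ n := n.cast_nonneg
          linarith) one_pos hb
    simpa only [Real.rpow_natCast, Real.rpow_one, neg_mul] using h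
  · have h := Real.integral_rpow_mul_exp_neg_mul_Ioi (a := n + 1) (r := b) (by positivity) hb
    rw [Real.Gamma_nat_eq_factorial, add_sub_cancel_right] at h
    simp only [Real.rpow_natCast] at h
    rw [h, ← Nat.cast_succ, Real.rpow_natCast, one_div, inv_pow, Nat.succ_eq_add_one]
    ring

/-- The alternating sum is `(-1) ^ m` times the `m`-th forward difference of the degree `n`
polynomial `x ↦ x.choose n` at `x = n`. -/
lemma sum_alternating_choose_mul_choose {m n : ℕ} (h : n ≤ m) :
    ∑ j ∈ Finset.range (m + 1), (-1 : ℤ) ^ j * m.choose j * (j + n).choose n =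
      if n = m then (-1) ^ m else 0 := by
  have hfd : (fwdDiff 1)^[m] (fun x ↦ x.choose n : ℕ → ℤ) n = if n = m then 1 else 0 := by
    obtain ⟨d, rfl⟩ := Nat.exists_eq_add_of_le' h
    rw [Function.iterate_add_apply, show (fun x ↦ x.choose n : ℕ → ℤ) =
      fun x ↦ (x.choose (n + 0) : ℤ) from rfl, fwdDiff_iter_choose]
    rcases d with _ | d
    · simp
    · simp only [Nat.choose_zero_right, Nat.cast_one, Function.iterate_succ_apply, fwdDiff_const]
      simp [fwdDiff_iter_eq_sum_shift]
  rw [fwdDiff_iter_eq_sum_shift] at hfd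
  have hsign : ∀ j ∈ Finset.range (m + 1), (-1 : ℤ) ^ j * m.choose j * (j + n).choose n =
      (-1) ^ m * (((-1 : ℤ) ^ (m - j) * m.choose j) • ((n + j • 1).choose n : ℤ)) := by
    intro j hj
    have hj' : j ≤ m := by simpa [Nat.lt_succ_iff] using hj
    have : (-1 : ℤ) ^ m * (-1) ^ (m - j) = (-1) ^ j := by
      obtain ⟨d, rfl⟩ := Nat.exists_eq_add_of_le hj'
      rw [Nat.add_sub_cancel_left, pow_add, mul_assoc, ← mul_pow]
      simp
    rw [← this, smul_eq_mul, smul_eq_mul, mul_one, add_comm j n]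
    ring
  rw [Finset.sum_congr rfl hsign, ← Finset.mul_sum, hfd]
  split_ifs <;> simp

/-- Laguerre orthogonality: the moments of order `n ≤ m` of `laguerre m` vanish except for
`n = m`. -/
lemma integral_laguerre_mul_pow {b : ℝ} (hb : 0 < b) {m n : ℕ} (h : n ≤ m) :
    MeasureTheory.IntegrableOn
        (fun t : ℝ => laguerre m (b * t) * t ^ n * Real.exp (-(b * t))) (Set.Ioi 0) ∧
      ∫ t in Set.Ioi (0 : ℝ), laguerre m (b * t) * t ^ n * Real.exp (-(b * t)) =
        if n = m then (-1) ^ m * m.factorial / b ^ (m + 1) else 0 := by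
  have hexp : (fun t : ℝ => laguerre m (b * t) * t ^ n * Real.exp (-(b * t))) = fun t =>
      ∑ j ∈ Finset.range (m + 1), ((-1) ^ j * m.choose j * b ^ j / j.factorial) *
        (t ^ (j + n) * Real.exp (-(b * t))) := by
    funext t
    rw [laguerre, Finset.sum_mul, Finset.sum_mul]
    refine Finset.sum_congr rfl fun j _ => ?_
    rw [neg_pow, mul_pow]
    ring
  have hint (j : ℕ) : MeasureTheory.IntegrableOn (fun t : ℝ =>
      ((-1) ^ j * m.choose j * b ^ j / j.factorial) *
        (t ^ (j + n) * Real.exp (-(b * t)))) (Set.Ioi 0) :=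
    (integral_pow_mul_exp_neg hb (j + n)).1.const_mul _
  rw [hexp]
  refine ⟨MeasureTheory.integrable_finsetSum _ fun j _ => hint j, ?_⟩
  rw [MeasureTheory.integral_finsetSum _ fun j _ => hint j]
  have hterm (j : ℕ) : ∫ t in Set.Ioi (0 : ℝ),
      ((-1) ^ j * m.choose j * b ^ j / j.factorial) * (t ^ (j + n) * Real.exp (-(b * t))) =
        n.factorial / b ^ (n + 1) *
          (((-1 : ℤ) ^ j * m.choose j * (j + n).choose n : ℤ) : ℝ) := by
    rw [MeasureTheory.integral_const_mul, (integral_pow_mul_exp_neg hb (j + n)).2,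
      ← Nat.add_choose_mul_factorial_mul_factorial j n]
    push_cast
    field_simp
    ring
  simp_rw [hterm]
  rw [← Finset.mul_sum, ← Int.cast_sum, sum_alternating_choose_mul_choose h]
  split_ifs with hnm
  · subst hnm
    push_cast
    ring
  · simp

/-- `(-N)_n = (-1) ^ n N! / (N - n)!`, written without division for `N = a + n`. -/
lemma poch_neg_mul_factorial (a n : ℕ) :
    poch (-((a + n : ℕ) : ℝ)) n * a.factorial = (-1) ^ n * (a + n).factorial := by
  induction n generalizing a with
  | zero => simp [poch]
  | succ n ih =>
    have hlast : poch (-((a + (n + 1) : ℕ) : ℝ)) (n + 1) =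
        poch (-((a + 1 + n : ℕ) : ℝ)) n * -(a + 1 : ℝ) := by
      rw [poch, Finset.prod_range_succ, poch]
      push_cast
      rw [show -((a : ℝ) + (n + 1)) = -(a + 1 + n) by ring]
      ring
    have h := ih (a + 1)
    rw [Nat.factorial_succ] at h
    rw [hlast, show a + (n + 1) = a + 1 + n by ring, pow_succ]
    push_cast at h ⊢
    linear_combination -h

theorem statement9 (k r : ℕ) (hk : 1 ≤ k) (hkr : k ≤ r) (m : ℕ) (hm : m = r - k)
    (b : ℝ) (hb : 0 < b) :
    ∫ t in Set.Ioi (0 : ℝ),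
        laguerre m (b * t) *
          (∑ n ∈ Finset.range (m + 1),
            poch (-(m : ℝ)) n * poch (1 - (k : ℝ) - (r : ℝ)) n / ((n.factorial : ℝ)) ^ 2 *
              (-t / 2) ^ n) *
          Real.exp (-(b * t))
      = (((k + r - 1).factorial : ℝ) / ((2 * k - 1).factorial : ℝ)) *
          (1 / (2 ^ m * b ^ (m + 1))) := by
  set c : ℕ → ℝ := fun n => poch (-(m : ℝ)) n * poch (1 - (k : ℝ) - (r : ℝ)) n /
    (n.factorial : ℝ) ^ 2 * (-1 / 2) ^ n with hc
  have hexp : (fun t : ℝ => laguerre m (b * t) *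
      (∑ n ∈ Finset.range (m + 1),
        poch (-(m : ℝ)) n * poch (1 - (k : ℝ) - (r : ℝ)) n / ((n.factorial : ℝ)) ^ 2 *
          (-t / 2) ^ n) * Real.exp (-(b * t))) = fun t => ∑ n ∈ Finset.range (m + 1),
        c n * (laguerre m (b * t) * t ^ n * Real.exp (-(b * t))) := by
    funext t
    rw [Finset.mul_sum, Finset.sum_mul]
    refine Finset.sum_congr rfl fun n _ => ?_
    rw [hc, show -t / 2 = -1 / 2 * t by ring, mul_pow]
    ring
  have hle {n : ℕ} (hn : n ∈ Finset.range (m + 1)) : n ≤ m :=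
    Nat.lt_succ_iff.mp (Finset.mem_range.mp hn)
  rw [hexp, MeasureTheory.integral_finsetSum _ fun n hn =>
    (integral_laguerre_mul_pow hb (hle hn)).1.const_mul _]
  have hterm : ∀ n ∈ Finset.range (m + 1), ∫ t in Set.Ioi (0 : ℝ),
      c n * (laguerre m (b * t) * t ^ n * Real.exp (-(b * t))) =
        if n = m then c m * ((-1) ^ m * m.factorial / b ^ (m + 1)) else 0 := by
    intro n hn
    rw [MeasureTheory.integral_const_mul, (integral_laguerre_mul_pow hb (hle hn)).2]
    split_ifs with hnm
    · rw [hnm]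
    · simp
  rw [Finset.sum_congr rfl hterm, Finset.sum_ite_eq' _ m,
    if_pos (Finset.self_mem_range_succ m)]
  have h1 : poch (-(m : ℝ)) m = (-1) ^ m * m.factorial := by
    simpa using poch_neg_mul_factorial 0 m
  have h2 : poch (1 - (k : ℝ) - r) m =
      (-1) ^ m * (k + r - 1).factorial / (2 * k - 1).factorial := by
    have hsum : 2 * k - 1 + m = k + r - 1 := by omega
    have h := poch_neg_mul_factorial (2 * k - 1) m
    rw [hsum, Nat.cast_sub (by omega)] at h
    push_cast at h
    rw [eq_div_iff (by positivity), ← h]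
    ring_nf
  have hs : ((-1 : ℝ) ^ m) * (-1) ^ m = 1 := by rw [← mul_pow]; simp
  rw [hc]
  simp only
  rw [h1, h2, div_pow]
  field_simp
  linear_combination ((-1 : ℝ) ^ m * (-1) ^ m + 1) * hs
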